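/- Let g > 0 and let L, R be two states with h_L > 0 and h_R > 0, and let α ≥ max(|vx_L| + √(g·h_L + Bx_L²), |vx_R| + √(g·h_R + Bx_R²)). Then B := ¼·([vx]² + [Bx]²)·([h·vx] − 2α⟨h⟩) − ½·[h·Bx]·[vx]·[Bx] ≤ 0. -/

import Mathlib

open scoped BigOperators
noncomputable section
open Matrix

/-- A state of the 1D (x-split) shallow water MHD system together with
the bottom topography value `b`. -/
structure SWState where
  h : ℝ
  vx : ℝ
  vy : ℝ
  Bx : ℝ
  By : ℝ
  b : ℝ

namespace SWMHD

/-- Mean `⟨a⟩ = (a_L + a_R)/2` of an expression in the state variables. -/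
def amean (f : SWState → ℝ) (L R : SWState) : ℝ := (f L + f R) / 2

/-- Jump `[a] = a_R − a_L` of an expression in the state variables. -/
def ajump (f : SWState → ℝ) (L R : SWState) : ℝ := f R - f L

/-- Entropy variables `V`. -/
def entropyVars (g : ℝ) (U : SWState) : Fin 5 → ℝ :=
  ![g * (U.h + U.b) - (U.vx ^ 2 + U.vy ^ 2 + U.Bx ^ 2 + U.By ^ 2) / 2,
    U.vx, U.vy, U.Bx, U.By]

/-- Jump of the entropy variables. -/
def vjump (g : ℝ) (L R : SWState) : Fin 5 → ℝ :=
  fun k => entropyVars g R k - entropyVars g L k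

/-- Entropy potential `ψ₁ = ½ g h² vx`. -/
def psi1 (g : ℝ) (U : SWState) : ℝ := g * U.h ^ 2 * U.vx / 2

/-- `Φ = vx Bx + vy By`. -/
def Phi (U : SWState) : ℝ := U.vx * U.Bx + U.vy * U.By

/-- The physical flux `F₁` of the x-split system. -/
def physFlux (g : ℝ) (U : SWState) : Fin 5 → ℝ :=
  ![U.h * U.vx,
    U.h * U.vx ^ 2 - U.h * U.Bx ^ 2 + g * U.h ^ 2 / 2,
    U.h * U.vx * U.vy - U.h * U.Bx * U.By,
    0,
    U.h * (U.vx * U.By - U.Bx * U.vy)]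

/-- The physical entropy flux `q₁`. -/
def q1 (g : ℝ) (U : SWState) : ℝ :=
  ((U.vx ^ 2 + U.vy ^ 2 + U.Bx ^ 2 + U.By ^ 2) / 2 + g * U.h + g * U.b) * U.h * U.vx
    - U.h * U.Bx * (U.vx * U.Bx + U.vy * U.By)

/-- The entropy conservative (EC) two-point flux `F̃₁(L,R)`. -/
def ecFlux (g : ℝ) (L R : SWState) : Fin 5 → ℝ :=
  ![amean (fun U => U.h) L R * amean (fun U => U.vx) L R,
    amean (fun U => U.h) L R * (amean (fun U => U.vx) L R) ^ 2
      + g / 2 * amean (fun U => U.h ^ 2) L R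
      - amean (fun U => U.h * U.Bx) L R * amean (fun U => U.Bx) L R
      + g * (amean (fun U => U.h * U.b) L R
             - amean (fun U => U.h) L R * amean (fun U => U.b) L R),
    amean (fun U => U.h) L R * amean (fun U => U.vx) L R * amean (fun U => U.vy) L R
      - amean (fun U => U.h * U.Bx) L R * amean (fun U => U.By) L R,
    amean (fun U => U.h) L R * amean (fun U => U.vx) L R * amean (fun U => U.Bx) L R
      - amean (fun U => U.h * U.Bx) L R * amean (fun U => U.vx) L R,
    amean (fun U => U.h) L R * amean (fun U => U.vx) L R * amean (fun U => U.By) L R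
      - amean (fun U => U.h * U.Bx) L R * amean (fun U => U.vy) L R]

/-- The entropy conservation condition `[V]·F = [ψ₁] − [Φ]⟨hBx⟩ + g[h b vx] − g[h vx]⟨b⟩`
for a two-point numerical flux `F`. -/
def ecCondition (g : ℝ) (F : Fin 5 → ℝ) (L R : SWState) : Prop :=
  vjump g L R ⬝ᵥ F
    = ajump (psi1 g) L R
      - ajump Phi L R * amean (fun U => U.h * U.Bx) L R
      + g * ajump (fun U => U.h * U.b * U.vx) L R
      - g * ajump (fun U => U.h * U.vx) L R * amean (fun U => U.b) L R

/-- The numerical entropy flux `q̃` built from a two-point flux value `F`. -/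
def numEntropyFlux (g : ℝ) (F : Fin 5 → ℝ) (L R : SWState) : ℝ :=
  (fun k => (entropyVars g L k + entropyVars g R k) / 2) ⬝ᵥ F
    + amean Phi L R * amean (fun U => U.h * U.Bx) L R
    - amean (psi1 g) L R
    + g * amean (fun U => U.h * U.vx) L R * amean (fun U => U.b) L R
    - g * amean (fun U => U.h * U.b * U.vx) L R

/-- Conservative variables `U = (h, h vx, h vy, h Bx, h By)`. -/
def consVar (U : SWState) : Fin 5 → ℝ :=
  ![U.h, U.h * U.vx, U.h * U.vy, U.h * U.Bx, U.h * U.By]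

/-- The source vector `Ψ = (0,0,0,vx,vy)`. -/
def PsiVec (U : SWState) : Fin 5 → ℝ := ![0, 0, 0, U.vx, U.vy]

/-- The bottom-topography source vector `G₁ = (0, g h, 0, 0, 0)`. -/
def G1Vec (g : ℝ) (U : SWState) : Fin 5 → ℝ := ![0, g * U.h, 0, 0, 0]

/-- The mathematical entropy (total energy). -/
def entropyFn (g : ℝ) (U : SWState) : ℝ :=
  U.h * (U.vx ^ 2 + U.vy ^ 2 + U.Bx ^ 2 + U.By ^ 2) / 2 + g * U.h ^ 2 / 2 + g * U.h * U.b

end SWMHD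

open SWMHD

/-!
Write `p = [vx]` and `q = [Bx]`. Each of `[h vx] − 2α⟨h⟩` and `[h Bx]` splits into a multiple of
`h_L` plus a multiple of `h_R`, so `−4B` is the combination with weights `h_L` and `h_R` of the
quadratic forms `c (p² + q²) + 2 b p q` with `(c, b) = (α + vx_L, −Bx_L)` and
`(c, b) = (α − vx_R, Bx_R)`. Such a form has eigenvalues `c ± b`, hence is nonnegative for
`|b| ≤ c`, which holds in both cases because `√(g h + Bx²) ≥ |Bx|`.
-/

/-- The binary quadratic form with matrix `!![c, b; b, c]`, evaluated at `(p, q)`: each water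
column contributes such a form in the jumps of `vx` and `Bx` to the term `B`. -/
def equalDiagForm {K : Type*} [CommRing K] (c b p q : K) : K :=
  c * (p ^ 2 + q ^ 2) + 2 * b * p * q

theorem two_mul_equalDiagForm {K : Type*} [CommRing K] (c b p q : K) :
    2 * equalDiagForm c b p q = (c + b) * (p + q) ^ 2 + (c - b) * (p - q) ^ 2 := by
  rw [equalDiagForm]
  ring

theorem equalDiagForm_nonneg {K : Type*} [CommRing K] [LinearOrder K] [IsStrictOrderedRing K]
    {b c : K} (hbc : |b| ≤ c) (p q : K) : 0 ≤ equalDiagForm c b p q := by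
  obtain ⟨neg_le, le⟩ := abs_le.mp hbc
  have sum_nonneg : 0 ≤ (c + b) * (p + q) ^ 2 := mul_nonneg (by linarith) (sq_nonneg _)
  have diff_nonneg : 0 ≤ (c - b) * (p - q) ^ 2 := mul_nonneg (by linarith) (sq_nonneg _)
  refine (mul_nonneg_iff_of_pos_left (two_pos : (0 : K) < 2)).mp ?_
  rw [two_mul_equalDiagForm]
  exact add_nonneg sum_nonneg diff_nonneg

theorem abs_le_sqrt_add_sq {a : ℝ} (ha : 0 ≤ a) (x : ℝ) : |x| ≤ √(a + x ^ 2) :=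
  Real.abs_le_sqrt (le_add_of_nonneg_left ha)

namespace SWMHD

/-- The term `B` of the entropy production of the Lax–Friedrichs flux with dissipation speed `α`. -/
def termB (α : ℝ) (L R : SWState) : ℝ :=
  (1 / 4) * ((ajump (fun U => U.vx) L R) ^ 2 + (ajump (fun U => U.Bx) L R) ^ 2)
      * (ajump (fun U => U.h * U.vx) L R - 2 * α * amean (fun U => U.h) L R)
    - (1 / 2) * ajump (fun U => U.h * U.Bx) L R
      * ajump (fun U => U.vx) L R * ajump (fun U => U.Bx) L R

theorem termB_eq_equalDiagForm (α : ℝ) (L R : SWState) :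
    termB α L R =
      -(1 / 4) *
        (L.h * equalDiagForm (α + L.vx) (-L.Bx)
            (ajump (fun U => U.vx) L R) (ajump (fun U => U.Bx) L R)
          + R.h * equalDiagForm (α - R.vx) R.Bx
            (ajump (fun U => U.vx) L R) (ajump (fun U => U.Bx) L R)) := by
  simp only [termB, equalDiagForm, ajump, amean]
  ring

end SWMHD

theorem termB_nonpos_general {α : ℝ} {L R : SWState} (hL : 0 ≤ L.h) (hR : 0 ≤ R.h)
    (hαL : -L.vx + |L.Bx| ≤ α) (hαR : R.vx + |R.Bx| ≤ α) : termB α L R ≤ 0 := by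
  have hBL : |-L.Bx| ≤ α + L.vx := by rw [abs_neg]; linarith
  have hBR : |R.Bx| ≤ α - R.vx := by linarith
  rw [termB_eq_equalDiagForm]
  exact mul_nonpos_of_nonpos_of_nonneg (by norm_num) <|
    add_nonneg (mul_nonneg hL (equalDiagForm_nonneg hBL _ _))
      (mul_nonneg hR (equalDiagForm_nonneg hBR _ _))

/-- the term `B` in the entropy production decomposition of the
Lax–Friedrichs flux is nonpositive. -/
theorem termB_nonpos (g : ℝ) (hg : 0 < g) (L R : SWState)
    (hL : 0 < L.h) (hR : 0 < R.h) (α : ℝ)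
    (hα : max (|L.vx| + Real.sqrt (g * L.h + L.Bx ^ 2))
              (|R.vx| + Real.sqrt (g * R.h + R.Bx ^ 2)) ≤ α) :
    (1 / 4) * ((ajump (fun U => U.vx) L R) ^ 2 + (ajump (fun U => U.Bx) L R) ^ 2)
        * (ajump (fun U => U.h * U.vx) L R - 2 * α * amean (fun U => U.h) L R)
      - (1 / 2) * ajump (fun U => U.h * U.Bx) L R
        * ajump (fun U => U.vx) L R * ajump (fun U => U.Bx) L R ≤ 0 := by
  obtain ⟨hαL, hαR⟩ := max_le_iff.mp hα
  exact termB_nonpos_general hL.le hR.le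
    ((add_le_add (neg_le_abs L.vx) (abs_le_sqrt_add_sq (by positivity) L.Bx)).trans hαL)
    ((add_le_add (le_abs_self R.vx) (abs_le_sqrt_add_sq (by positivity) R.Bx)).trans hαR)
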